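/- arXiv:1311.2010 — 2 statements merged into one kernel-verified Lean document; each statement's English description precedes it below -/
import Mathlib

section
/- The intersection, over all n > 0 and all x ∈ 𝐵_n, of the theories Th(𝐵_n / x) equals intuitionistic propositional logic IPC, where 𝐵_n is the Brouwer algebra of upwards closed subsets of (P({1,…,n}) ∖ {∅}, ⊇) ordered under reverse inclusion. -/
/-!
Membership of a world `X` in an upper set interpreting a formula obeys the Kripke clauses on the
frame of nonempty subsets of `Fin n` ordered by `⊇`, except that in the factor by `x` the upper
set `x` consists of exploding worlds, where every formula holds.

Soundness (`ivInterp_eq_bot_of_IPC`) holds in an arbitrary Brouwer algebra, because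
`ψ \ φ = ⊥ ↔ ψ ≤ φ`.

For completeness, an unprovable `φ` fails at a point `w₀` of a finite Kripke model `W`
(`exists_finite_countermodel`): the worlds are the consistent prime theories inside the finite set
of subformulas of `φ`. Such a model is then turned into a factor. Embed `W` into `Fin n`, missing
at least one point, and send a set `X ⊆ Fin n` to the set of worlds `C = {w₀} ∪ {w | w ∉ X}`.
Shrinking `X` enlarges `C`. Fix a point `z` outside the image of `W`. Let `x` be the upper set of
those `X` for which `z ∉ X` or `C` is *not* a chain, and send every other `X` to the greatest
element of `C`. This is a p-morphism: it is monotone, and if `t` is the greatest element of `C` and `t ≤ u`, then removing `u` from `X`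
adds `u` to the chain as its new greatest element. Hence forcing is preserved
(`mem_ivInterp_iff_forces`), and the full set `Fin n`, which is sent to `w₀`, refutes `φ` in the
factor by `x`.
-/

namespace Brouwer

/-- Propositional formulas. -/
inductive PropForm : Type
  | var : ℕ → PropForm
  | fls : PropForm
  | conj : PropForm → PropForm → PropForm
  | disj : PropForm → PropForm → PropForm
  | impl : PropForm → PropForm → PropForm

/-- Interpretation of a propositional formula in a Brouwer algebra (= co-Heyting
algebra), where `⊥` is interpreted as the element `t`, logical `∧` as the join `⊔`,
logical `∨` as the meet `⊓`, and implication `φ → ψ` as `ψ \\ φ`. -/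
def coInterp {α : Type*} [CoheytingAlgebra α] (t : α) (v : ℕ → α) : PropForm → α
  | .var n => v n
  | .fls => t
  | .conj φ ψ => coInterp t v φ ⊔ coInterp t v ψ
  | .disj φ ψ => coInterp t v φ ⊓ coInterp t v ψ
  | .impl φ ψ => coInterp t v ψ \ coInterp t v φ

/-- The theory of a Brouwer algebra: all formulas whose interpretation under every
valuation is the bottom element (with `⊥` interpreted as the top element `⊤`). -/
def brouwerTh (α : Type*) [CoheytingAlgebra α] : Set PropForm :=
  {φ | ∀ v : ℕ → α, coInterp ⊤ v φ = ⊥}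

/-- Interpretation of a propositional formula in the interval `[x, y]` of a Brouwer
algebra, with `⊥` interpreted as the top element `y` of the interval and implication
`φ → ψ` as `(ψ \\ φ) ⊔ x`. -/
def ivInterp {α : Type*} [CoheytingAlgebra α] (x y : α) (v : ℕ → α) : PropForm → α
  | .var n => v n
  | .fls => y
  | .conj φ ψ => ivInterp x y v φ ⊔ ivInterp x y v ψ
  | .disj φ ψ => ivInterp x y v φ ⊓ ivInterp x y v ψ
  | .impl φ ψ => (ivInterp x y v ψ \ ivInterp x y v φ) ⊔ x

/-- The theory of the interval `[x, y]` of a Brouwer algebra. -/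
def ivTh {α : Type*} [CoheytingAlgebra α] (x y : α) : Set PropForm :=
  {φ | ∀ v : ℕ → α, (∀ n, v n ∈ Set.Icc x y) → ivInterp x y v φ = x}

/-- A Hilbert-style proof system for intuitionistic propositional logic. -/
inductive IPC : PropForm → Prop
  | mp {φ ψ} : IPC (.impl φ ψ) → IPC φ → IPC ψ
  | ax_k {φ ψ} : IPC (.impl φ (.impl ψ φ))
  | ax_s {φ ψ χ} : IPC (.impl (.impl φ (.impl ψ χ)) (.impl (.impl φ ψ) (.impl φ χ)))
  | and_left {φ ψ} : IPC (.impl (.conj φ ψ) φ)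
  | and_right {φ ψ} : IPC (.impl (.conj φ ψ) ψ)
  | and_intro {φ ψ} : IPC (.impl φ (.impl ψ (.conj φ ψ)))
  | or_inl {φ ψ} : IPC (.impl φ (.disj φ ψ))
  | or_inr {φ ψ} : IPC (.impl ψ (.disj φ ψ))
  | or_elim {φ ψ χ} :
      IPC (.impl (.impl φ χ) (.impl (.impl ψ χ) (.impl (.disj φ ψ) χ)))
  | exfalso {φ} : IPC (.impl .fls φ)

/-- The Brouwer algebra `B_n` of upwards closed subsets of
`(P({1,…,n}) ∖ {∅}, ⊇)`, ordered under reverse inclusion. -/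
abbrev BSet (n : ℕ) := UpperSet ({X : Set (Fin n) // X.Nonempty}ᵒᵈ)

/-! ### Soundness -/

section Soundness

variable {α : Type*} [CoheytingAlgebra α]

/-- Interpretations never leave the interval `[⊥, y]`. -/
lemma ivInterp_le {y : α} {v : ℕ → α} (hv : ∀ n, v n ≤ y) (φ : PropForm) :
    ivInterp ⊥ y v φ ≤ y := by
  induction φ with
  | var n => exact hv n
  | fls => exact le_rfl
  | conj a b iha ihb => exact sup_le iha ihb
  | disj a b iha ihb => exact inf_le_left.trans iha
  | impl a b iha ihb => exact sup_le (sdiff_le.trans ihb) bot_le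

lemma ivInterp_eq_bot_of_IPC {y : α} {v : ℕ → α} (hv : ∀ n, v n ≤ y) {φ : PropForm}
    (h : IPC φ) : ivInterp ⊥ y v φ = ⊥ := by
  induction h with
  | mp _ _ ih₁ ih₂ =>
    simp only [ivInterp, sup_bot_eq, sdiff_eq_bot_iff] at ih₁
    exact le_bot_iff.1 (ih₁.trans ih₂.le)
  | ax_k =>
    simp only [ivInterp, sup_bot_eq, sdiff_eq_bot_iff]
    exact sdiff_le
  | @ax_s φ ψ χ =>
    simp only [ivInterp, sup_bot_eq, sdiff_eq_bot_iff]
    generalize ivInterp ⊥ y v φ = a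
    generalize ivInterp ⊥ y v ψ = b
    generalize ivInterp ⊥ y v χ = c
    have h₁ : c ≤ b ⊔ (c \ b) := le_sup_sdiff
    have h₂ : c \ b ≤ a ⊔ ((c \ b) \ a) := le_sup_sdiff
    have h₃ : b ≤ a ⊔ (b \ a) := le_sup_sdiff
    rw [sdiff_le_iff, sdiff_le_iff]
    refine h₁.trans (sup_le (h₃.trans ?_) (h₂.trans ?_))
    · exact sup_le le_sup_left (le_sup_left.trans le_sup_right)
    · exact sup_le le_sup_left (le_sup_right.trans le_sup_right)
  | and_left =>
    simp only [ivInterp, sup_bot_eq, sdiff_eq_bot_iff]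
    exact le_sup_left
  | and_right =>
    simp only [ivInterp, sup_bot_eq, sdiff_eq_bot_iff]
    exact le_sup_right
  | and_intro =>
    simp only [ivInterp, sup_bot_eq, sdiff_eq_bot_iff, sdiff_le_iff]
    rw [sup_comm]
  | or_inl =>
    simp only [ivInterp, sup_bot_eq, sdiff_eq_bot_iff]
    exact inf_le_left
  | or_inr =>
    simp only [ivInterp, sup_bot_eq, sdiff_eq_bot_iff]
    exact inf_le_right
  | or_elim =>
    simp only [ivInterp, sup_bot_eq]
    rw [sdiff_eq_bot_iff, sdiff_le_iff, sdiff_inf, sup_comm]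
  | exfalso =>
    simp only [ivInterp, sup_bot_eq, sdiff_eq_bot_iff]
    exact ivInterp_le hv _

end Soundness

/-! ### Finite Kripke countermodels -/

/-- Kripke forcing over a preorder `W` with valuation `V`. Persistence of `V` is not built in. -/
def Forces {W : Type*} [Preorder W] (V : ℕ → Set W) : W → PropForm → Prop
  | w, .var n => w ∈ V n
  | _, .fls => False
  | w, .conj φ ψ => Forces V w φ ∧ Forces V w ψ
  | w, .disj φ ψ => Forces V w φ ∨ Forces V w ψ
  | w, .impl φ ψ => ∀ u, w ≤ u → Forces V u φ → Forces V u ψ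

/-- Derivability in `IPC` from a set of hypotheses. -/
inductive Deriv (Γ : Set PropForm) : PropForm → Prop
  | thm {φ} : IPC φ → Deriv Γ φ
  | hyp {φ} : φ ∈ Γ → Deriv Γ φ
  | mp {φ ψ} : Deriv Γ (.impl φ ψ) → Deriv Γ φ → Deriv Γ ψ

lemma Deriv.toIPC {φ : PropForm} (h : Deriv ∅ φ) : IPC φ := by
  induction h with
  | thm h => exact h
  | hyp h => exact h.elim
  | mp _ _ ih₁ ih₂ => exact .mp ih₁ ih₂

lemma Deriv.deduction {Γ : Set PropForm} {φ ψ : PropForm} (h : Deriv (insert φ Γ) ψ) :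
    Deriv Γ (.impl φ ψ) := by
  induction h with
  | thm h => exact .mp (.thm .ax_k) (.thm h)
  | hyp h =>
    rcases h with rfl | h
    · exact .mp (.mp (.thm .ax_s) (.thm .ax_k)) (.thm (.ax_k (ψ := .fls)))
    · exact .mp (.thm .ax_k) (.hyp h)
  | mp _ _ ih₁ ih₂ => exact .mp (.mp (.thm .ax_s) ih₁) ih₂

/-- The set of subformulas of a formula. -/
def subforms : PropForm → Set PropForm
  | .var n => {.var n}
  | .fls => {.fls}
  | .conj φ ψ => insert (.conj φ ψ) (subforms φ ∪ subforms ψ)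
  | .disj φ ψ => insert (.disj φ ψ) (subforms φ ∪ subforms ψ)
  | .impl φ ψ => insert (.impl φ ψ) (subforms φ ∪ subforms ψ)

lemma subforms_finite (φ : PropForm) : (subforms φ).Finite := by
  induction φ with
  | var n => exact Set.finite_singleton _
  | fls => exact Set.finite_singleton _
  | conj a b iha ihb => exact (iha.union ihb).insert _
  | disj a b iha ihb => exact (iha.union ihb).insert _
  | impl a b iha ihb => exact (iha.union ihb).insert _

lemma self_mem_subforms (φ : PropForm) : φ ∈ subforms φ := by
  cases φ <;> simp [subforms]

lemma subforms_trans {φ ψ : PropForm} (h : ψ ∈ subforms φ) : subforms ψ ⊆ subforms φ := by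
  induction φ with
  | var n => rw [show ψ = .var n from h]
  | fls => rw [show ψ = .fls from h]
  | conj a b iha ihb | disj a b iha ihb | impl a b iha ihb =>
    rcases h with rfl | h | h
    · exact subset_rfl
    · exact (iha h).trans (Set.subset_union_left.trans (Set.subset_insert _ _))
    · exact (ihb h).trans (Set.subset_union_right.trans (Set.subset_insert _ _))

/-- A world of the canonical model over `S`: a consistent prime theory inside `S`, deductively
closed relative to `S`. -/
structure IsWorld (S Γ : Set PropForm) : Prop where
  sub : Γ ⊆ S
  closed : ∀ ψ ∈ S, Deriv Γ ψ → ψ ∈ Γ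
  consistent : ¬ Deriv Γ .fls
  prime : ∀ a b, .disj a b ∈ Γ → a ∈ Γ ∨ b ∈ Γ

/-- Lindenbaum's lemma inside a finite set `S`: a maximal subset of `S` not deriving `χ` is a
world. -/
lemma exists_world {S Γ : Set PropForm} {χ : PropForm} (hS : S.Finite)
    (hdisj : ∀ a b, .disj a b ∈ S → a ∈ S ∧ b ∈ S) (hΓ : Γ ⊆ S) (h : ¬ Deriv Γ χ) :
    ∃ Δ, IsWorld S Δ ∧ Γ ⊆ Δ ∧ ¬ Deriv Δ χ := by
  have hfin : {Δ : Set PropForm | Δ ⊆ S ∧ ¬ Deriv Δ χ}.Finite :=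
    hS.finite_subsets.subset fun Δ hΔ => hΔ.1
  obtain ⟨Δ, hle, hmax⟩ := hfin.exists_le_maximal (show Γ ∈ _ from ⟨hΓ, h⟩)
  obtain ⟨hsub, hχ⟩ := hmax.prop
  have key : ∀ ψ ∈ S, ψ ∉ Δ → Deriv Δ (.impl ψ χ) := by
    intro ψ hψ hn
    by_contra hd
    have hmem : insert ψ Δ ∈ {Δ : Set PropForm | Δ ⊆ S ∧ ¬ Deriv Δ χ} :=
      ⟨Set.insert_subset hψ hsub, fun h' => hd h'.deduction⟩
    exact hn (hmax.le_of_ge hmem (Set.subset_insert _ _) (Set.mem_insert _ _))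
  refine ⟨Δ, ⟨hsub, ?_, fun hf => hχ (.mp (.thm .exfalso) hf), ?_⟩, hle, hχ⟩
  · intro ψ hψ hd
    by_contra hn
    exact hχ (.mp (key ψ hψ hn) hd)
  · intro a b hab
    obtain ⟨ha, hb⟩ := hdisj a b (hsub hab)
    by_contra! hn
    exact hχ (.mp (.mp (.mp (.thm .or_elim) (key a ha hn.1)) (key b hb hn.2)) (.hyp hab))

/-- Truth lemma for the canonical model on the subformulas of `φ`. -/
lemma forces_iff_mem (φ : PropForm) (ψ : PropForm) (hψ : ψ ∈ subforms φ)
    (w : {Γ // IsWorld (subforms φ) Γ}) :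
    Forces (fun n => {u : {Γ // IsWorld (subforms φ) Γ} | .var n ∈ u.1}) w ψ ↔ ψ ∈ w.1 := by
  have hd : ∀ a b, PropForm.disj a b ∈ subforms φ → a ∈ subforms φ ∧ b ∈ subforms φ :=
    fun a b h => ⟨subforms_trans h (.inr (.inl (self_mem_subforms a))),
      subforms_trans h (.inr (.inr (self_mem_subforms b)))⟩
  induction ψ generalizing w with
  | var n => exact Iff.rfl
  | fls => exact ⟨False.elim, fun h => w.2.consistent (.hyp h)⟩
  | conj a b iha ihb =>
    have ha := subforms_trans hψ (.inr (.inl (self_mem_subforms a)))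
    have hb := subforms_trans hψ (.inr (.inr (self_mem_subforms b)))
    simp only [Forces, iha ha, ihb hb]
    refine ⟨fun h => ?_, fun h => ⟨?_, ?_⟩⟩
    · exact w.2.closed _ hψ (.mp (.mp (.thm .and_intro) (.hyp h.1)) (.hyp h.2))
    · exact w.2.closed _ ha (.mp (.thm .and_left) (.hyp h))
    · exact w.2.closed _ hb (.mp (.thm .and_right) (.hyp h))
  | disj a b iha ihb =>
    obtain ⟨ha, hb⟩ := hd a b hψ
    simp only [Forces, iha ha, ihb hb]
    refine ⟨?_, w.2.prime a b⟩
    rintro (h | h)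
    · exact w.2.closed _ hψ (.mp (.thm .or_inl) (.hyp h))
    · exact w.2.closed _ hψ (.mp (.thm .or_inr) (.hyp h))
  | impl a b iha ihb =>
    have ha := subforms_trans hψ (.inr (.inl (self_mem_subforms a)))
    have hb := subforms_trans hψ (.inr (.inr (self_mem_subforms b)))
    simp only [Forces, iha ha, ihb hb]
    refine ⟨fun h => ?_, fun h u hu hau => ?_⟩
    · by_contra hn
      have hnd : ¬ Deriv (insert a w.1) b := fun h' => hn (w.2.closed _ hψ h'.deduction)
      obtain ⟨Δ, hΔ, hle, hb'⟩ := exists_world (subforms_finite φ) hd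
        (Set.insert_subset ha w.2.sub) hnd
      exact hb' (.hyp (h ⟨Δ, hΔ⟩ ((Set.subset_insert _ _).trans hle)
        (hle (Set.mem_insert _ _))))
    · exact u.2.closed _ hb (.mp (.hyp (hu h)) (.hyp hau))

/-- Completeness of `IPC` together with the finite model property. -/
lemma exists_finite_countermodel {φ : PropForm} (h : ¬ IPC φ) :
    ∃ (W : Type) (_ : PartialOrder W) (_ : Finite W) (V : ℕ → Set W),
      (∀ n, IsUpperSet (V n)) ∧ ∃ w, ¬ Forces V w φ := by
  have hd : ∀ a b, PropForm.disj a b ∈ subforms φ → a ∈ subforms φ ∧ b ∈ subforms φ :=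
    fun a b h => ⟨subforms_trans h (.inr (.inl (self_mem_subforms a))),
      subforms_trans h (.inr (.inr (self_mem_subforms b)))⟩
  obtain ⟨Δ, hΔ, -, hφ⟩ := exists_world (subforms_finite φ) hd (Set.empty_subset _)
    (fun h' : Deriv ∅ φ => h h'.toIPC)
  refine ⟨{Γ // IsWorld (subforms φ) Γ}, inferInstance, ?_,
    fun n => {u | .var n ∈ u.1}, fun n u u' hu h => hu h, ⟨Δ, hΔ⟩, ?_⟩
  · exact ((subforms_finite φ).finite_subsets.subset
      (fun Γ (hΓ : IsWorld (subforms φ) Γ) => hΓ.sub)).to_subtype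
  · rw [forces_iff_mem φ φ (self_mem_subforms φ)]
    exact fun h' => hφ (.hyp h')

/-! ### From finite Kripke models to factors of `BSet n` -/

/-- The implication of the Brouwer algebra of upper sets obeys the Kripke clause. -/
lemma mem_sdiff_upperSet {P : Type*} [Preorder P] (a b : UpperSet P) (X : P) :
    X ∈ b \ a ↔ ∀ Y, X ≤ Y → Y ∈ a → Y ∈ b := by
  rw [← UpperSet.le_Ici, sdiff_le_iff]
  constructor
  · intro h Y hXY hY
    exact h (show Y ∈ a ⊔ UpperSet.Ici X from UpperSet.mem_sup_iff.2 ⟨hY, hXY⟩)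
  · intro h Y hY
    obtain ⟨h₁, h₂⟩ := UpperSet.mem_sup_iff.1 (show Y ∈ a ⊔ UpperSet.Ici X from hY)
    exact h Y h₂ h₁

section Transfer

variable {W : Type*} {n : ℕ}

/-- The set of worlds coded by `X`: the base world `w₀` and all worlds missing from `X`. -/
def missing (j : W → Fin n) (w₀ : W) (X : Set (Fin n)) : Set W := insert w₀ {w | j w ∉ X}

lemma missing_anti (j : W → Fin n) (w₀ : W) {X Y : Set (Fin n)} (h : Y ⊆ X) :
    missing j w₀ X ⊆ missing j w₀ Y :=
  Set.insert_subset_insert fun _ hw hy => hw (h hy)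

variable [PartialOrder W]

/-- The sets that represent a point of `W`: those containing the spare point `z` whose missing
worlds form a chain. -/
def IsGood (j : W → Fin n) (z : Fin n) (w₀ : W) (X : Set (Fin n)) : Prop :=
  z ∈ X ∧ IsChain (· ≤ ·) (missing j w₀ X)

lemma IsGood.mono {j : W → Fin n} {z : Fin n} {w₀ : W} {X Y : Set (Fin n)} (h : Y ⊆ X)
    (hY : IsGood j z w₀ Y) : IsGood j z w₀ X :=
  ⟨h hY.1, hY.2.mono (missing_anti j w₀ h)⟩

/-- The upper set of exploding worlds, namely the sets representing no point of `W`. -/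
def explode (j : W → Fin n) (z : Fin n) (w₀ : W) : BSet n where
  carrier := {X | ¬ IsGood j z w₀ (OrderDual.ofDual X).1}
  upper' _ _ hXY hX hY := hX (hY.mono hXY)

/-- The valuation on `BSet n` induced by `V`: besides the exploding worlds, `p` holds at those `X`
for which some missing world satisfies `p`. For upward closed `V p` and `X` representing a point,
this says that the greatest missing world satisfies `p`. -/
def pullVal (j : W → Fin n) (z : Fin n) (w₀ : W) (V : ℕ → Set W) (p : ℕ) : BSet n where
  carrier := {X | X ∈ explode j z w₀ ∨ ∃ w ∈ missing j w₀ (OrderDual.ofDual X).1, w ∈ V p}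
  upper' _ _ hXY := Or.imp (fun h => (explode j z w₀).upper hXY h)
    fun ⟨w, hw, hV⟩ => ⟨w, missing_anti j w₀ hXY hw, hV⟩

lemma pullVal_le (j : W → Fin n) (z : Fin n) (w₀ : W) (V : ℕ → Set W) (p : ℕ) :
    pullVal j z w₀ V p ≤ explode j z w₀ := fun _ h => Or.inl h

lemma IsGood.exists_isGreatest [Finite W] {j : W → Fin n} {z : Fin n} {w₀ : W}
    {X : Set (Fin n)} (hX : IsGood j z w₀ X) : ∃ t, IsGreatest (missing j w₀ X) t := by
  obtain ⟨t, ht⟩ := (Set.toFinite (missing j w₀ X)).exists_maximal ⟨w₀, Set.mem_insert _ _⟩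
  refine ⟨t, ht.prop, fun u hu => ?_⟩
  exact (hX.2.total hu ht.prop).elim id fun h => ht.le_of_ge hu h

/-- The back condition: removing `u ≥ t` from `X` puts `u` on top of the chain. The spare point
`z`, which is not removed, keeps the smaller set nonempty. -/
lemma IsGood.exists_extension {j : W → Fin n} (hj : j.Injective) {z : Fin n}
    (hz : ∀ w, j w ≠ z) {w₀ : W} {X : Set (Fin n)} (hX : IsGood j z w₀ X) {t u : W}
    (ht : IsGreatest (missing j w₀ X) t) (htu : t ≤ u) :
    ∃ Y ⊆ X, IsGood j z w₀ Y ∧ IsGreatest (missing j w₀ Y) u := by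
  have hmiss : missing j w₀ (X \ {j u}) = insert u (missing j w₀ X) := by
    ext w
    simp only [missing, Set.mem_insert_iff, Set.mem_ofPred_eq, Set.mem_sdiff,
      Set.mem_singleton_iff, hj.eq_iff]
    tauto
  have hub : ∀ w ∈ missing j w₀ X, w ≤ u := fun w hw => (ht.2 hw).trans htu
  refine ⟨X \ {j u}, Set.sdiff_subset, ⟨⟨hX.1, fun h => hz u h.symm⟩, ?_⟩, ?_⟩ <;> rw [hmiss]
  · exact hX.2.insert fun w hw _ => Or.inr (hub w hw)
  · refine ⟨Set.mem_insert _ _, ?_⟩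
    rintro w (rfl | hw)
    exacts [le_rfl, hub w hw]

/-- Sending a good set to its greatest missing world preserves and reflects forcing. -/
lemma mem_ivInterp_iff_forces [Finite W] {j : W → Fin n} (hj : j.Injective) {z : Fin n}
    (hz : ∀ w, j w ≠ z) (w₀ : W) {V : ℕ → Set W} (hV : ∀ p, IsUpperSet (V p)) (φ : PropForm)
    {X : {X : Set (Fin n) // X.Nonempty}} (hX : IsGood j z w₀ X.1) {t : W}
    (ht : IsGreatest (missing j w₀ X.1) t) :
    OrderDual.toDual X ∈ ivInterp ⊥ (explode j z w₀) (pullVal j z w₀ V) φ ↔ Forces V t φ := by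
  induction φ generalizing X t with
  | var p =>
    refine ⟨?_, fun h => Or.inr ⟨t, ht.1, h⟩⟩
    rintro (h | ⟨w, hw, hwV⟩)
    · exact (h hX).elim
    · exact hV p (ht.2 hw) hwV
  | fls => exact ⟨fun h => h hX, False.elim⟩
  | conj a b iha ihb => exact UpperSet.mem_sup_iff.trans (and_congr (iha hX ht) (ihb hX ht))
  | disj a b iha ihb => exact UpperSet.mem_inf_iff.trans (or_congr (iha hX ht) (ihb hX ht))
  | impl a b iha ihb =>
    simp only [ivInterp, sup_bot_eq, mem_sdiff_upperSet, Forces]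
    constructor
    · intro h u htu hua
      obtain ⟨Y, hYX, hY, hu⟩ := hX.exists_extension hj hz ht htu
      have hmem := h (OrderDual.toDual ⟨Y, z, hY.1⟩) hYX
      exact (ihb hY hu).1 (hmem ((iha hY hu).2 hua))
    · intro h Y hXY hYa
      by_cases hY : IsGood j z w₀ (OrderDual.ofDual Y).1
      · obtain ⟨u, hu⟩ := hY.exists_isGreatest
        have htu : t ≤ u := hu.2 (missing_anti j w₀ hXY ht.1)
        exact (ihb hY hu).2 (h u htu ((iha hY hu).1 hYa))
      -- every formula holds at an exploding world
      · exact ivInterp_le (pullVal_le j z w₀ V) b hY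

end Transfer

/-- Proposition 4.6: the intersection over all `n > 0` and all `x ∈ B_n` of the theories
of the factors `B_n / x` (i.e. of the intervals `[⊥, x]` of `B_n`) is exactly IPC. -/
theorem iInter_BSet_factorTh_eq_IPC :
    {φ : PropForm | ∀ n : ℕ, 0 < n → ∀ x : BSet n, φ ∈ ivTh ⊥ x} = {φ | IPC φ} := by
  ext φ
  refine ⟨fun h => ?_, fun h n _ x v hv => ivInterp_eq_bot_of_IPC (fun p => (hv p).2) h⟩
  by_contra hφ
  obtain ⟨W, _, _, V, hV, w₀, hw₀⟩ := exists_finite_countermodel hφ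
  -- all but the last element of `Fin (Nat.card W + 1)` code worlds
  let j : W → Fin (Nat.card W + 1) := fun w => (Finite.equivFin W w).castSucc
  have hj : j.Injective := (Fin.castSucc_injective _).comp (Finite.equivFin W).injective
  have hz : ∀ w, j w ≠ Fin.last _ := fun w => Fin.castSucc_ne_last _
  have hmiss : missing j w₀ Set.univ = {w₀} := by simp [missing]
  have hgood : IsGood j (Fin.last _) w₀ Set.univ := by
    refine ⟨Set.mem_univ _, ?_⟩
    rw [hmiss]
    exact IsChain.singleton
  have hgreatest : IsGreatest (missing j w₀ Set.univ) w₀ := by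
    rw [hmiss]
    exact isGreatest_singleton
  refine hw₀ ((mem_ivInterp_iff_forces hj hz w₀ hV φ (X := ⟨Set.univ, Set.univ_nonempty⟩)
    hgood hgreatest).1 ?_)
  rw [h _ (Nat.succ_pos _) (explode j (Fin.last _) w₀) (pullVal j (Fin.last _) w₀ V)
    fun p => ⟨bot_le, pullVal_le _ _ _ _ _⟩]
  exact UpperSet.mem_bot

end Brouwer
end

section
/- Let 𝐵 be a Brouwer algebra and let x, y, z ∈ 𝐵 be such that x ⊕ z = y. Then Th([0,z]_𝐵) ⊆ Th([x,y]_𝐵). -/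
/-! The map `u ↦ x ⊔ u` is a surjective homomorphism of Brouwer algebras from `[⊥, z]` onto
`[x, x ⊔ z]`: it respects implication by `sup_sdiff_eq_sdiff_sup`, and `w ∈ [x, x ⊔ z]` is the
image of `w ⊓ z` by distributivity. Hence it commutes with the interpretation of formulas
(`sup_ivInterp`), every valuation in `[x, x ⊔ z]` is the image of one in `[⊥, z]`, and a formula
valid in `[⊥, z]` is valid in its homomorphic image. -/

namespace Brouwer

/-- Joining with `x` respects implication, where the implication of the target is that of an
interval with bottom element `x`. -/
theorem sup_sdiff_eq_sdiff_sup {α : Type*} [CoheytingAlgebra α] (x a b : α) :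
    x ⊔ b \ a = (x ⊔ b) \ (x ⊔ a) ⊔ x := by
  apply le_antisymm
  · refine sup_le le_sup_right (sdiff_le_iff.2 ?_)
    calc b ≤ x ⊔ b := le_sup_right
      _ ≤ (x ⊔ a) ⊔ (x ⊔ b) \ (x ⊔ a) := le_sup_sdiff
      _ = a ⊔ ((x ⊔ b) \ (x ⊔ a) ⊔ x) := by ac_rfl
  · refine sup_le (sdiff_le_iff.2 (sup_le (le_sup_left.trans le_sup_left) ?_)) le_sup_left
    exact le_sup_sdiff.trans (sup_le_sup le_sup_right le_sup_right)

theorem sup_ivInterp {α : Type*} [CoheytingAlgebra α] (x z : α) (v : ℕ → α) (φ : PropForm) :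
    x ⊔ ivInterp ⊥ z v φ = ivInterp x (x ⊔ z) (fun n => x ⊔ v n) φ := by
  induction φ with
  | var n => rfl
  | fls => rfl
  | conj φ ψ hφ hψ => rw [ivInterp, ivInterp, ← hφ, ← hψ, sup_sup_distrib_left]
  | disj φ ψ hφ hψ => simp only [ivInterp, ← hφ, ← hψ, sup_inf_left]
  | impl φ ψ hφ hψ =>
    simp only [ivInterp, ← hφ, ← hψ, sup_bot_eq]
    exact sup_sdiff_eq_sdiff_sup _ _ _

/-- Lemma 4.9: in any Brouwer algebra, if `x ⊔ z = y` then the theory of the interval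
`[0, z]` is contained in the theory of the interval `[x, y]`. -/
theorem ivTh_le_of_sup_eq {α : Type*} [CoheytingAlgebra α] (x y z : α)
    (h : x ⊔ z = y) : ivTh (⊥ : α) z ⊆ ivTh x y := by
  intro φ hφ v hv
  -- `v n ⊓ z` lies in `[⊥, z]` and is a preimage of `v n` under `u ↦ x ⊔ u`.
  have hpre : (fun n => x ⊔ v n ⊓ z) = v := by
    funext n
    rw [sup_inf_left, h, sup_eq_right.2 (hv n).1, inf_eq_left.2 (hv n).2]
  have key := sup_ivInterp x z (fun n => v n ⊓ z) φ
  rw [hφ (fun n => v n ⊓ z) fun n => ⟨bot_le, inf_le_right⟩, hpre, h, sup_bot_eq] at key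
  exact key.symm

end Brouwer
end
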